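/- arXiv:math/0206178 — 2 statements merged into one kernel-verified Lean document; each statement's English description precedes it below -/
import Mathlib

section
/- The sequence of real numbers {r̃_n} satisfies the difference equation n^3(n+1)^3 b̃0(n−1) r̃_{n+1} − 2n b̃1(n) r̃_n − b̃2(n) r̃_{n−1} + 2n(n−1)^4 (2n−3) b̃0(n) r̃_{n−2} = 0 for every integer n ≥ 2. -/
noncomputable section

open Filter


def bt0r (x : ℝ) : ℝ := 41218*x^7 + 35648*x^6 - 932*x^5 - 13190*x^4 - 5128*x^3
  + 811*x^2 + 957*x + 174

def bt1r (x : ℝ) : ℝ := 3874492*x^12 - 14084302*x^11 + 12425954*x^10 + 8641603*x^9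
  - 15230839*x^8 - 1369195*x^7 + 8618417*x^6 - 623249*x^5 - 2785973*x^4
  + 308165*x^3 + 495325*x^2 - 40670*x - 37632

def bt2r (x : ℝ) : ℝ := 2*(48802112*x^13 - 201803328*x^12 + 267014032*x^11 - 69927236*x^10
  - 95912858*x^9 + 37524471*x^8 + 30257812*x^7 - 9523224*x^6 - 8524312*x^5
  + 2138687*x^4 + 1507490*x^3 - 398634*x^2 - 111012*x + 33408)

/-- The very-well-poised hypergeometric series `r̃_n`
(the summation index `k ≥ 1` is written as `k + 1` with `k : ℕ`). -/
def rt (n : ℕ) : ℝ := -(Nat.factorial n : ℝ)^4 * ∑' k : ℕ,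
  (((k : ℝ) + 1) + (n : ℝ)/2)
    * (∏ j ∈ Finset.range (n+1), (((k : ℝ) + 1) - (j : ℝ)))
    * (∏ j ∈ Finset.range (n+1), (((k : ℝ) + 1) + (n : ℝ) + (j : ℝ)))
    / (∏ j ∈ Finset.range (n+1), (((k : ℝ) + 1) + (j : ℝ))^6)

/-- Coefficient of `k^0` in the certificate polynomial. -/
def cX0 (n : ℝ) : ℝ :=
  263960072*n^23 - 2538179932*n^22 + 10236281152*n^21 - 22232317604*n^20 + 27213705356*n^19
    - 16502635240*n^18 + 457393970*n^17 + 5128112666*n^16 - 1416381898*n^15 - 1211071714*n^14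
    + 449279410*n^13 + 313059298*n^12 - 141095074*n^11 - 50613442*n^10 + 32001204*n^9 + 907152*n^8
    - 2806272*n^7 + 400896*n^6

/-- Coefficient of `k^1` in the certificate polynomial. -/
def cX1 (n : ℝ) : ℝ :=
  3545572360*n^22 - 29863361164*n^21 + 105745270872*n^20 - 200893362300*n^19 + 211237497268*n^18
    - 101343022980*n^17 - 13317571392*n^16 + 33667926086*n^15 - 2786550180*n^14 - 8454991998*n^13
    + 779659688*n^12 + 2449083222*n^11 - 482820184*n^10 - 459376162*n^9 + 171740736*n^8
    + 21076944*n^7 - 18374400*n^6 + 2405376*n^5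

/-- Coefficient of `k^2` in the certificate polynomial. -/
def cX2 (n : ℝ) : ℝ :=
  17091950496*n^21 - 134057289520*n^20 + 439055017320*n^19 - 762315039620*n^18 + 712587739576*n^17
    - 269328129812*n^16 - 88828711400*n^15 + 99736569546*n^14 + 8417915042*n^13 - 26198318306*n^12
    - 2465265380*n^11 + 7887036574*n^10 - 473272778*n^9 - 1565273214*n^8 + 411040068*n^7
    + 90371088*n^6 - 51314688*n^5 + 6013440*n^4

/-- Coefficient of `k^3` in the certificate polynomial. -/
def cX3 (n : ℝ) : ℝ :=
  44991260592*n^20 - 332937156232*n^19 + 1020252465440*n^18 - 1633807549122*n^17 + 1361375115624*n^16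
    - 380560733358*n^15 - 241239501220*n^14 + 162487454112*n^13 + 42998991013*n^12 - 43579906986*n^11
    - 12216388140*n^10 + 13581097140*n^9 + 887325919*n^8 - 2866546706*n^7 + 505105476*n^6
    + 194053584*n^5 - 79176960*n^4 + 8017920*n^3

/-- Coefficient of `k^4` in the certificate polynomial. -/
def cX4 (n : ℝ) : ℝ :=
  75155417352*n^19 - 525363413740*n^18 + 1505112806790*n^17 - 2212568904620*n^16 + 1615304239266*n^15
    - 270897373254*n^14 - 367913435524*n^13 + 149491315689*n^12 + 81050726187*n^11 - 40457512513*n^10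
    - 22886871015*n^9 + 13552957536*n^8 + 3080152732*n^7 - 3144697658*n^6 + 282571092*n^5
    + 245251632*n^4 - 72829440*n^3 + 6013440*n^2

/-- Coefficient of `k^5` in the certificate polynomial. -/
def cX5 (n : ℝ) : ℝ :=
  85186394704*n^18 - 560586833806*n^17 + 1491666628106*n^16 - 1986799407728*n^15 + 1223890463564*n^14
    - 28033217524*n^13 - 344303894741*n^12 + 66416656799*n^11 + 84961492154*n^10 - 17962205511*n^9
    - 23927541457*n^8 + 7496798804*n^7 + 3924702122*n^6 - 2092948938*n^5 - 26937924*n^4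
    + 189740016*n^3 - 39889152*n^2 + 2405376*n^1

/-- Coefficient of `k^6` in the certificate polynomial. -/
def cX6 (n : ℝ) : ℝ :=
  67257512718*n^17 - 414290480798*n^16 + 1013480511174*n^15 - 1197975689932*n^14 + 579744479686*n^13
    + 112356400005*n^12 - 199129561161*n^11 - 3880636790*n^10 + 52625519826*n^9 + 1236233514*n^8
    - 14849741142*n^7 + 1525376736*n^6 + 2717202080*n^5 - 784049158*n^4 - 135090132*n^3
    + 87882288*n^2 - 12026880*n^1 + 400896

/-- Coefficient of `k^7` in the certificate polynomial. -/
def cX7 (n : ℝ) : ℝ :=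
  36798729694*n^16 - 210860874328*n^15 + 468270905522*n^14 - 476774574108*n^13 + 155159246144*n^12
    + 95326215887*n^11 - 66952280558*n^10 - 19898707220*n^9 + 18399388119*n^8 + 5541749836*n^7
    - 5271180984*n^6 - 612132552*n^5 + 1056437756*n^4 - 115455178*n^3 - 77928012*n^2 + 22117488*n^1
    - 1536768

/-- Coefficient of `k^8` in the certificate polynomial. -/
def cX8 (n : ℝ) : ℝ :=
  13265065286*n^15 - 70612457398*n^14 + 140843287982*n^13 - 118722384704*n^12 + 15221676410*n^11
    + 35822248661*n^10 - 10657794705*n^9 - 9547650062*n^8 + 2932374478*n^7 + 2623626644*n^6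
    - 899460014*n^5 - 441235352*n^4 + 208075402*n^3 + 17298318*n^2 - 18852204*n^1 + 2271744

/-- Coefficient of `k^9` in the certificate polynomial. -/
def cX9 (n : ℝ) : ℝ :=
  2586718026*n^14 - 13325889686*n^13 + 24457365290*n^12 - 16750748000*n^11 - 1887447266*n^10
    + 6661610761*n^9 - 169445007*n^8 - 1974456986*n^7 + 3170148*n^6 + 529407140*n^5 - 23328089*n^4
    - 95435192*n^3 + 13370577*n^2 + 7301562*n^1 - 1603584

/-- Coefficient of `k^10` in the certificate polynomial. -/
def cX10 (n : ℝ) : ℝ :=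
  -83095488*n^13 - 337062980*n^12 + 1538303256*n^11 - 1439060332*n^10 - 205450082*n^9 + 680670648*n^8
    + 55620682*n^7 - 215425720*n^6 - 34240242*n^5 + 51067703*n^4 + 8594183*n^3 - 7817994*n^2
    - 721752*n^1 + 534528

/-- Coefficient of `k^11` in the certificate polynomial. -/
def cX11 (n : ℝ) : ℝ :=
  -214910652*n^12 + 475103176*n^11 - 117976876*n^10 - 287714498*n^9 + 61435302*n^8 + 119718078*n^7
    - 2069736*n^6 - 32971426*n^5 - 3939449*n^4 + 5152883*n^3 + 916284*n^2 - 342780*n^1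
    - 66816

/-- Coefficient of `k^12` in the certificate polynomial. -/
def cX12 (n : ℝ) : ℝ :=
  -68669188*n^11 + 112571928*n^10 + 11824906*n^9 - 66043044*n^8 - 12554972*n^7 + 20754820*n^6
    + 7617922*n^5 - 3452021*n^4 - 1787931*n^3 + 242382*n^2 + 150336*n^1

/-- Coefficient of `k^13` in the certificate polynomial. -/
def cX13 (n : ℝ) : ℝ :=
  -12695144*n^10 + 10206468*n^9 + 10078002*n^8 - 3795664*n^7 - 5007312*n^6 - 155250*n^5
    + 1183594*n^4 + 270429*n^3 - 108663*n^2 - 36018*n^1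

/-- Coefficient of `k^14` in the certificate polynomial. -/
def cX14 (n : ℝ) : ℝ :=
  -1483848*n^9 - 46788*n^8 + 1102992*n^7 + 446880*n^6 - 211092*n^5 - 183036*n^4 - 10122*n^3
    + 22446*n^2 + 5220*n^1

/-- Coefficient of `k^15` in the certificate polynomial. -/
def cX15 (n : ℝ) : ℝ :=
  -82436*n^8 - 71296*n^7 + 1864*n^6 + 26380*n^5 + 10256*n^4 - 1622*n^3 - 1914*n^2 - 348*n^1

/-- The certificate polynomial, in Horner form. -/
def cX (n k : ℝ) : ℝ :=
  (((((((((((((((cX15 n) * k + cX14 n) * k + cX13 n) * k + cX12 n) * k + cX11 n) * k + cX10 n) * k + cX9 n) * k + cX8 n) * k + cX7 n) * k + cX6 n) * k + cX5 n) * k + cX4 n) * k + cX3 n) * k + cX2 n) * k + cX1 n) * k + cX0 n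

set_option maxHeartbeats 0 in
set_option maxRecDepth 100000 in
theorem cert_identity (n k : ℝ) :
    4*n*(2*n-3)*bt0r n * (k+(n-2)/2)*(k+n-2)*(k+n-1)*(k+n)*((k+n-1)*(k+n)*(k+n+1))^6
    - 2*bt2r n * (k+(n-1)/2)*(k-n+1)*(k+2*n-3)*(k+2*n-2)*(k+n-1)*(k+n)*((k+n)*(k+n+1))^6
    - 4*n^5*bt1r n * (k+n/2)*(k-n+1)*(k-n)*(k+2*n-3)*(k+2*n-2)*(k+2*n-1)*(k+2*n)*(k+n)*(k+n+1)^6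
    + 2*n^7*(n+1)^7*bt0r (n-1) * (k+(n+1)/2)*(k-n+1)*(k-n)*(k-n-1)
      *(k+2*n-3)*(k+2*n-2)*(k+2*n-1)*(k+2*n)*(k+2*n+1)*(k+2*n+2)
    = (k+1)*(k+2*n-3)*k^6 * cX n (k+1) - (k-n+1)*(k+n)*(k+n+1)^6 * cX n k := by
  unfold bt0r bt1r bt2r cX cX0 cX1 cX2 cX3 cX4 cX5 cX6 cX7 cX8 cX9 cX10 cX11 cX12 cX13 cX14 cX15
  ring

/-- `∏_{j ≤ n} (x - j)`. -/
def pA (n : ℕ) (x : ℝ) : ℝ := ∏ j ∈ Finset.range (n+1), (x - (j : ℝ))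

/-- `∏_{j ≤ n} (x + n + j)`. -/
def pB (n : ℕ) (x : ℝ) : ℝ := ∏ j ∈ Finset.range (n+1), (x + (n : ℝ) + (j : ℝ))

/-- `∏_{j ≤ n} (x + j)`. -/
def pC (n : ℕ) (x : ℝ) : ℝ := ∏ j ∈ Finset.range (n+1), (x + (j : ℝ))

/-- The summand of the series. -/
def tT (n : ℕ) (x : ℝ) : ℝ := (x + (n : ℝ)/2) * pA n x * pB n x / pC n x ^ 6

theorem rt_eq (n : ℕ) : rt n = -(Nat.factorial n : ℝ)^4 * ∑' k : ℕ, tT n ((k : ℝ) + 1) := by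
  simp only [rt, tT, pA, pB, pC, Finset.prod_pow]

theorem pA_succ (n : ℕ) (x : ℝ) : pA (n+1) x = pA n x * (x - n - 1) := by
  unfold pA
  rw [Finset.prod_range_succ _ (n+1)]
  push_cast
  ring

theorem pC_succ (n : ℕ) (x : ℝ) : pC (n+1) x = pC n x * (x + n + 1) := by
  unfold pC
  rw [Finset.prod_range_succ _ (n+1)]
  push_cast
  ring

theorem pB_succ (n : ℕ) (x : ℝ) :
    pB (n+1) x * (x + n) = pB n x * ((x + 2*n + 1) * (x + 2*n + 2)) := by
  unfold pB
  rw [Finset.prod_range_succ _ (n+1), Finset.prod_range_succ _ n, Finset.prod_range_succ' _ n]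
  have : ∀ j ∈ Finset.range n, x + ((n+1 : ℕ) : ℝ) + (j : ℝ) = x + (n : ℝ) + ((j + 1 : ℕ) : ℝ) := by
    intro j _
    push_cast
    ring
  rw [Finset.prod_congr rfl this]
  push_cast
  ring

theorem pA_shift (n : ℕ) (x : ℝ) : pA n (x+1) * (x - n) = pA n x * (x + 1) := by
  unfold pA
  rw [Finset.prod_range_succ' _ n, Finset.prod_range_succ _ n]
  have : ∀ j ∈ Finset.range n, x + 1 - ((j + 1 : ℕ) : ℝ) = x - (j : ℝ) := by
    intro j _
    push_cast
    ring
  rw [Finset.prod_congr rfl this]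
  push_cast
  ring

theorem pC_shift (n : ℕ) (x : ℝ) : pC n (x+1) * x = pC n x * (x + n + 1) := by
  unfold pC
  rw [Finset.prod_range_succ _ n, Finset.prod_range_succ' _ n]
  have : ∀ j ∈ Finset.range n, x + 1 + (j : ℝ) = x + ((j + 1 : ℕ) : ℝ) := by
    intro j _
    push_cast
    ring
  rw [Finset.prod_congr rfl this]
  push_cast
  ring

theorem pB_shift (n : ℕ) (x : ℝ) : pB n (x+1) * (x + n) = pB n x * (x + 2*n + 1) := by
  unfold pB
  rw [Finset.prod_range_succ _ n, Finset.prod_range_succ' _ n]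
  have : ∀ j ∈ Finset.range n, x + 1 + (n : ℝ) + (j : ℝ) = x + n + ((j + 1 : ℕ) : ℝ) := by
    intro j _
    push_cast
    ring
  rw [Finset.prod_congr rfl this]
  push_cast
  ring

theorem pC_pos (n : ℕ) {x : ℝ} (hx : 1 ≤ x) : 0 < pC n x :=
  Finset.prod_pos fun j _ => by positivity

theorem le_pC (n : ℕ) {x : ℝ} (hx : 1 ≤ x) : x ≤ pC n x := by
  induction n with
  | zero => simp [pC]
  | succ n ih =>
    rw [pC_succ]
    have : (1 : ℝ) ≤ x + n + 1 := by
      have : (0 : ℝ) ≤ n := by positivity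
      linarith
    nlinarith

theorem abs_pA_le (n : ℕ) {x : ℝ} (hx : 1 ≤ x) : |pA n x| ≤ pC n x := by
  unfold pA pC
  rw [Finset.abs_prod]
  refine Finset.prod_le_prod (fun _ _ => abs_nonneg _) fun j _ => ?_
  have : (0 : ℝ) ≤ j := by positivity
  rw [abs_le]
  constructor <;> linarith

theorem abs_pB_le (n : ℕ) {x : ℝ} (hx : 1 ≤ x) : |pB n x| ≤ ((n : ℝ)+1)^(n+1) * pC n x := by
  unfold pB pC
  have : ((n : ℝ)+1)^(n+1) = ∏ _j ∈ Finset.range (n+1), ((n : ℝ)+1) := by simp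
  rw [Finset.abs_prod, this, ← Finset.prod_mul_distrib]
  refine Finset.prod_le_prod (fun _ _ => abs_nonneg _) fun j _ => ?_
  have hj : (0 : ℝ) ≤ j := by positivity
  have hn : (0 : ℝ) ≤ n := by positivity
  rw [abs_of_nonneg (by positivity)]
  nlinarith [mul_nonneg hn hj, mul_nonneg hn (sub_nonneg.2 hx)]

/-- The basic estimate. -/
theorem core_bound (n : ℕ) {x : ℝ} (hx : 1 ≤ x) :
    |pA n x * pB n x / pC n x ^ 6| ≤ ((n : ℝ)+1)^(n+1) / x^4 := by
  have hC := pC_pos n hx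
  have hx0 : 0 < x := by linarith
  rw [abs_div, abs_mul, abs_of_pos (pow_pos hC 6)]
  have h1 : |pA n x| * |pB n x| ≤ pC n x * (((n : ℝ)+1)^(n+1) * pC n x) :=
    mul_le_mul (abs_pA_le n hx) (abs_pB_le n hx) (abs_nonneg _) hC.le
  calc |pA n x| * |pB n x| / pC n x ^ 6
      ≤ pC n x * (((n : ℝ)+1)^(n+1) * pC n x) / pC n x ^ 6 := by gcongr
    _ = ((n : ℝ)+1)^(n+1) / pC n x ^ 4 := by field_simp
    _ ≤ _ := by
      have := le_pC n hx
      gcongr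

theorem tT_bound (n : ℕ) {x : ℝ} (hx : 1 ≤ x) :
    |tT n x| ≤ ((n : ℝ)+1)^(n+2) * (1 / x^2) := by
  have hx0 : 0 < x := by linarith
  have hn : (0 : ℝ) ≤ n := by positivity
  have e : tT n x = (x + (n : ℝ)/2) * (pA n x * pB n x / pC n x ^ 6) := by
    unfold tT
    ring
  rw [e, abs_mul, abs_of_nonneg (by positivity)]
  have h1 : x + (n : ℝ)/2 ≤ (n+1) * x := by nlinarith
  calc (x + (n : ℝ)/2) * |pA n x * pB n x / pC n x ^ 6|
      ≤ ((n+1) * x) * (((n : ℝ)+1)^(n+1) / x^4) := by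
        gcongr
        exact core_bound n hx
    _ = ((n : ℝ)+1)^(n+2) * (1 / x^3) := by
        field_simp
        ring
    _ ≤ _ := by
        gcongr ?_ * (1 / ?_)
        exact pow_le_pow_right₀ hx (by norm_num)

theorem summable_tT (n : ℕ) : Summable fun k : ℕ => tT n ((k : ℝ) + 1) := by
  have h : Summable fun k : ℕ => ((n : ℝ)+1)^(n+2) * (1 / ((k : ℝ)+1)^2) := by
    apply Summable.mul_left
    have := (summable_nat_add_iff 1).2 (Real.summable_one_div_nat_pow.2 (by norm_num : 1 < 2))
    simpa using this
  refine Summable.of_norm_bounded h fun k => ?_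
  rw [Real.norm_eq_abs]
  exact tT_bound n (by simp)

theorem horner_bound {p : ℝ → ℝ} {d : ℕ} (c : ℝ)
    (h : ∃ C : ℝ, ∀ x : ℝ, 1 ≤ x → |p x| ≤ C * x^d) :
    ∃ C : ℝ, ∀ x : ℝ, 1 ≤ x → |p x * x + c| ≤ C * x^(d+1) := by
  obtain ⟨C, hC⟩ := h
  refine ⟨C + |c|, fun x hx => ?_⟩
  have hx0 : 0 < x := by linarith
  have h1 := hC x hx
  have h2 : (1 : ℝ) ≤ x^(d+1) := one_le_pow₀ hx
  calc |p x * x + c| ≤ |p x| * x + |c| := by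
        refine (abs_add_le _ _).trans ?_
        rw [abs_mul, abs_of_pos hx0]
    _ ≤ C * x^d * x + |c| * x^(d+1) := by
        gcongr
        exact le_mul_of_one_le_right (abs_nonneg _) h2
    _ = _ := by ring

theorem cX_bound (n : ℝ) : ∃ C : ℝ, ∀ x : ℝ, 1 ≤ x → |cX n x| ≤ C * x^15 := by
  unfold cX
  iterate 15 refine horner_bound _ ?_
  exact ⟨|cX15 n|, fun x _ => by simp⟩

/-- The telescoping certificate. -/
def gG (m : ℕ) (x : ℝ) : ℝ :=
  (x - m - 1) * cX ((m : ℝ) + 2) x * (pA m x * pB m x / pC m x ^ 6)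
    / ((x + m + 1)^7 * (x + m + 2)^6 * (x + m))

theorem gG_bound (m : ℕ) : ∃ C : ℝ, ∀ x : ℝ, 1 ≤ x → |gG m x| ≤ C * (1 / x) := by
  obtain ⟨C, hC⟩ := cX_bound ((m : ℝ) + 2)
  refine ⟨(m+2) * C * ((m : ℝ)+1)^(m+1), fun x hx => ?_⟩
  have hx0 : 0 < x := by linarith
  have hm : (0 : ℝ) ≤ m := by positivity
  have hC0 : 0 ≤ C := by
    have := (abs_nonneg _).trans (hC 1 le_rfl)
    simpa using this
  have hD : x^14 ≤ (x + m + 1)^7 * (x + m + 2)^6 * (x + m) := by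
    calc x^14 = x^7 * x^6 * x := by ring
      _ ≤ _ := by gcongr <;> linarith
  have h1 : |x - m - 1| ≤ (m+2) * x := by
    rw [abs_le]
    constructor <;> nlinarith
  have hDpos : 0 < (x + m + 1)^7 * (x + m + 2)^6 * (x + m) := by positivity
  unfold gG
  rw [abs_div, abs_mul, abs_mul, abs_of_pos hDpos]
  calc _ ≤ ((m+2) * x) * (C * x^15) * (((m : ℝ)+1)^(m+1) / x^4) / x^14 := by
        gcongr
        · exact hC x hx
        · exact core_bound m hx
    _ = (m+2) * C * ((m : ℝ)+1)^(m+1) * (1 / x^2) := by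
        field_simp
    _ ≤ _ := by
        gcongr
        exact le_self_pow₀ hx (by norm_num)

theorem gG_tendsto (m : ℕ) : Tendsto (fun k : ℕ => gG m ((k : ℝ) + 1)) atTop (nhds 0) := by
  obtain ⟨C, hC⟩ := gG_bound m
  refine squeeze_zero_norm (a := fun k : ℕ => C * (1 / ((k : ℝ) + 1))) (fun k => ?_) ?_
  · rw [Real.norm_eq_abs]
    exact hC _ (by simp)
  · have := (tendsto_one_div_add_atTop_nhds_zero_nat (𝕜 := ℝ)).const_mul C
    simpa using this

theorem gG_one (m : ℕ) : gG m 1 = 0 := by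
  cases m with
  | zero => simp [gG]
  | succ m =>
    have : pA (m+1) 1 = 0 := by
      unfold pA
      exact Finset.prod_eq_zero (i := 1) (by simp) (by simp)
    simp [gG, this]

/-- The common factor of all the terms in the telescoping identity. -/
def hH (m : ℕ) (x : ℝ) : ℝ :=
  pA m x * pB m x / (pC m x ^ 6 * ((x+m+1) * (x+m+2) * (x+m+3))^6 * ((x+m) * (x+m+1) * (x+m+2)))

theorem tT0 (m : ℕ) {x : ℝ} (hx : 1 ≤ x) : tT m x =
    hH m x * ((x + m/2) * ((x+m) * (x+m+1) * (x+m+2)) * ((x+m+1) * (x+m+2) * (x+m+3))^6) := by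
  have hC := (pC_pos m hx).ne'
  have h0 : x + m ≠ 0 := by positivity
  have h1 : x + m + 1 ≠ 0 := by positivity
  have h2 : x + m + 2 ≠ 0 := by positivity
  have h3 : x + m + 3 ≠ 0 := by positivity
  unfold tT hH
  field_simp

theorem tT1 (m : ℕ) {x : ℝ} (hx : 1 ≤ x) : tT (m+1) x =
    hH m x * ((x + (m+1)/2) * (x-m-1) * (x+2*m+1) * (x+2*m+2) * (x+m+1) * (x+m+2)
      * ((x+m+2) * (x+m+3))^6) := by
  have hC := (pC_pos m hx).ne'
  have h0 : x + m ≠ 0 := by positivity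
  have h1 : x + m + 1 ≠ 0 := by positivity
  have h2 : x + m + 2 ≠ 0 := by positivity
  have h3 : x + m + 3 ≠ 0 := by positivity
  have hB : pB (m+1) x = pB m x * ((x + 2*m + 1) * (x + 2*m + 2)) / (x + m) := by
    rw [eq_div_iff h0, pB_succ]
  unfold tT hH
  rw [hB, pA_succ, pC_succ]
  push_cast
  field_simp

theorem tT2 (m : ℕ) {x : ℝ} (hx : 1 ≤ x) : tT (m+2) x =
    hH m x * ((x + (m+2)/2) * (x-m-1) * (x-m-2) * (x+2*m+1) * (x+2*m+2) * (x+2*m+3) * (x+2*m+4)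
      * (x+m+2) * (x+m+3)^6) := by
  have hC := (pC_pos m hx).ne'
  have h0 : x + m ≠ 0 := by positivity
  have h1 : x + m + 1 ≠ 0 := by positivity
  have h2 : x + m + 2 ≠ 0 := by positivity
  have h3 : x + m + 3 ≠ 0 := by positivity
  have hB : pB (m+1) x = pB m x * ((x + 2*m + 1) * (x + 2*m + 2)) / (x + m) := by
    rw [eq_div_iff h0, pB_succ]
  have hB2 : pB (m+2) x = pB (m+1) x * ((x + 2*m + 3) * (x + 2*m + 4)) / (x + m + 1) := by
    rw [eq_div_iff h1]
    have := pB_succ (m+1) x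
    push_cast at this
    linear_combination this
  have hA2 : pA (m+2) x = pA m x * (x-m-1) * (x-m-2) := by
    rw [pA_succ, pA_succ]
    push_cast
    ring
  have hC2 : pC (m+2) x = pC m x * (x+m+1) * (x+m+2) := by
    rw [pC_succ, pC_succ]
    push_cast
    ring
  unfold tT hH
  rw [hB2, hB, hA2, hC2]
  push_cast
  field_simp

theorem tT3 (m : ℕ) {x : ℝ} (hx : 1 ≤ x) : tT (m+3) x =
    hH m x * ((x + (m+3)/2) * (x-m-1) * (x-m-2) * (x-m-3) * (x+2*m+1) * (x+2*m+2) * (x+2*m+3)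
      * (x+2*m+4) * (x+2*m+5) * (x+2*m+6)) := by
  have hC := (pC_pos m hx).ne'
  have h0 : x + m ≠ 0 := by positivity
  have h1 : x + m + 1 ≠ 0 := by positivity
  have h2 : x + m + 2 ≠ 0 := by positivity
  have h3 : x + m + 3 ≠ 0 := by positivity
  have hB : pB (m+1) x = pB m x * ((x + 2*m + 1) * (x + 2*m + 2)) / (x + m) := by
    rw [eq_div_iff h0, pB_succ]
  have hB2 : pB (m+2) x = pB (m+1) x * ((x + 2*m + 3) * (x + 2*m + 4)) / (x + m + 1) := by
    rw [eq_div_iff h1]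
    have := pB_succ (m+1) x
    push_cast at this
    linear_combination this
  have hB3 : pB (m+3) x = pB (m+2) x * ((x + 2*m + 5) * (x + 2*m + 6)) / (x + m + 2) := by
    rw [eq_div_iff h2]
    have := pB_succ (m+2) x
    push_cast at this
    linear_combination this
  have hA2 : pA (m+3) x = pA m x * (x-m-1) * (x-m-2) * (x-m-3) := by
    rw [pA_succ, pA_succ, pA_succ]
    push_cast
    ring
  have hC2 : pC (m+3) x = pC m x * (x+m+1) * (x+m+2) * (x+m+3) := by
    rw [pC_succ, pC_succ, pC_succ]
    push_cast
    ring
  unfold tT hH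
  rw [hB3, hB2, hB, hA2, hC2]
  push_cast
  field_simp

theorem gG0 (m : ℕ) {x : ℝ} (hx : 1 ≤ x) : gG m x =
    hH m x * ((x-m-1) * (x+m+2) * (x+m+3)^6 * cX ((m : ℝ) + 2) x) := by
  have hC := (pC_pos m hx).ne'
  have h0 : x + m ≠ 0 := by positivity
  have h1 : x + m + 1 ≠ 0 := by positivity
  have h2 : x + m + 2 ≠ 0 := by positivity
  have h3 : x + m + 3 ≠ 0 := by positivity
  unfold gG hH
  field_simp

theorem gG1 (m : ℕ) {x : ℝ} (hx : 1 ≤ x) : gG m (x+1) =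
    hH m x * ((x+1) * (x+2*m+1) * x^6 * cX ((m : ℝ) + 2) (x+1)) := by
  have hC := (pC_pos m hx).ne'
  have hx0 : x ≠ 0 := by positivity
  have h0 : x + m ≠ 0 := by positivity
  have h1 : x + m + 1 ≠ 0 := by positivity
  have h2 : x + m + 2 ≠ 0 := by positivity
  have h3 : x + m + 3 ≠ 0 := by positivity
  have hB : pB m (x+1) = pB m x * (x + 2*m + 1) / (x + m) := by
    rw [eq_div_iff h0, pB_shift]
  have hCs : pC m (x+1) = pC m x * (x + m + 1) / x := by
    rw [eq_div_iff hx0, pC_shift]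
  have e : gG m (x+1) = (pA m (x+1) * (x - m)) * cX ((m : ℝ) + 2) (x+1)
      * (pB m (x+1) / pC m (x+1) ^ 6) / ((x + m + 2)^7 * (x + m + 3)^6 * (x + m + 1)) := by
    unfold gG
    rw [show x + 1 - m - 1 = x - m by ring, show x + 1 + m + 1 = x + m + 2 by ring,
      show x + 1 + m + 2 = x + m + 3 by ring, show x + 1 + m = x + m + 1 by ring]
    ring
  rw [e, pA_shift, hB, hCs]
  unfold hH
  field_simp

theorem telescope (m : ℕ) {x : ℝ} (hx : 1 ≤ x) :
    4*((m : ℝ)+2)*(2*m+1)*bt0r (m+2) * tT m x - 2*bt2r (m+2) * tT (m+1) x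
      - 4*((m : ℝ)+2)^5*bt1r (m+2) * tT (m+2) x
      + 2*((m : ℝ)+2)^7*(m+3)^7*bt0r (m+1) * tT (m+3) x
    = gG m (x+1) - gG m x := by
  rw [tT0 m hx, tT1 m hx, tT2 m hx, tT3 m hx, gG0 m hx, gG1 m hx]
  have h := cert_identity ((m : ℝ)+2) x
  rw [show (m : ℝ) + 2 - 1 = m + 1 by ring] at h
  generalize bt0r ((m : ℝ)+2) = a0 at *
  generalize bt0r ((m : ℝ)+1) = a1 at *
  generalize bt1r ((m : ℝ)+2) = a2 at *
  generalize bt2r ((m : ℝ)+2) = a3 at *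
  generalize cX ((m : ℝ)+2) (x+1) = a4 at *
  generalize cX ((m : ℝ)+2) x = a5 at *
  generalize hH m x = H at *
  have e0 : x + ((m : ℝ)+2) - 2 = x + m := by ring
  have e1 : x + ((m : ℝ)+2) - 1 = x + m + 1 := by ring
  have e2 : x + ((m : ℝ)+2) = x + m + 2 := by ring
  have e3 : x + (m : ℝ) + 2 + 1 = x + m + 3 := by ring
  have f1 : x - ((m : ℝ)+2) + 1 = x - m - 1 := by ring
  have f2 : x - ((m : ℝ)+2) = x - m - 2 := by ring
  have f3 : x - (m : ℝ) - 2 - 1 = x - m - 3 := by ring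
  have g1 : x + 2*((m : ℝ)+2) - 3 = x + 2*m + 1 := by ring
  have g2 : x + 2*((m : ℝ)+2) - 2 = x + 2*m + 2 := by ring
  have g3 : x + 2*((m : ℝ)+2) - 1 = x + 2*m + 3 := by ring
  have g4 : x + 2*((m : ℝ)+2) = x + 2*m + 4 := by ring
  have g5 : x + 2*(m : ℝ) + 4 + 1 = x + 2*m + 5 := by ring
  have g6 : x + 2*(m : ℝ) + 4 + 2 = x + 2*m + 6 := by ring
  have i0 : ((m : ℝ)+2-2)/2 = m/2 := by ring
  have i1 : (m : ℝ)+1+2 = m+3 := by ring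
  have i2 : (m : ℝ)+2+1 = m+3 := by ring
  have i3 : 2*((m : ℝ)+2)-3 = 2*m+1 := by ring
  rw [e0, e1, f1, g1, g2, g3, e2, e3, f2, f3, g4, g5, g6, i0, i2, i3] at h
  generalize x + (m : ℝ)/2 = y0 at *
  generalize x + ((m : ℝ)+1)/2 = y1 at *
  generalize x + ((m : ℝ)+2)/2 = y2 at *
  generalize x + ((m : ℝ)+3)/2 = y3 at *
  generalize x + (m : ℝ) + 1 = z1 at *
  generalize x + (m : ℝ) + 2 = z2 at *
  generalize x + (m : ℝ) + 3 = z3 at *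
  generalize x + (m : ℝ) = z0 at *
  generalize x - (m : ℝ) - 1 = w1 at *
  generalize x - (m : ℝ) - 2 = w2 at *
  generalize x - (m : ℝ) - 3 = w3 at *
  generalize x + 2*(m : ℝ) + 1 = v1 at *
  generalize x + 2*(m : ℝ) + 2 = v2 at *
  generalize x + 2*(m : ℝ) + 3 = v3 at *
  generalize x + 2*(m : ℝ) + 4 = v4 at *
  generalize x + 2*(m : ℝ) + 5 = v5 at *
  generalize x + 2*(m : ℝ) + 6 = v6 at *
  generalize (m : ℝ) + 2 = s2 at *
  generalize (m : ℝ) + 3 = s3 at *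
  generalize 2 * (m : ℝ) + 1 = s1 at *
  generalize x + 1 = x1 at *
  linear_combination H * h

theorem tsum_telescope (m : ℕ) :
    4*((m : ℝ)+2)*(2*m+1)*bt0r (m+2) * (∑' k : ℕ, tT m ((k : ℝ)+1))
      - 2*bt2r (m+2) * (∑' k : ℕ, tT (m+1) ((k : ℝ)+1))
      - 4*((m : ℝ)+2)^5*bt1r (m+2) * (∑' k : ℕ, tT (m+2) ((k : ℝ)+1))
      + 2*((m : ℝ)+2)^7*(m+3)^7*bt0r (m+1) * (∑' k : ℕ, tT (m+3) ((k : ℝ)+1)) = 0 := by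
  have h0 := (summable_tT m).hasSum.mul_left (4*((m : ℝ)+2)*(2*m+1)*bt0r (m+2))
  have h1 := (summable_tT (m+1)).hasSum.mul_left (2*bt2r ((m : ℝ)+2))
  have h2 := (summable_tT (m+2)).hasSum.mul_left (4*((m : ℝ)+2)^5*bt1r (m+2))
  have h3 := (summable_tT (m+3)).hasSum.mul_left (2*((m : ℝ)+2)^7*(m+3)^7*bt0r (m+1))
  have h := ((h0.sub h1).sub h2).add h3
  have ht := h.tendsto_sum_nat
  refine tendsto_nhds_unique ht ?_
  refine (gG_tendsto m).congr fun N => ?_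
  have hs : ∀ k ∈ Finset.range N, 4*((m : ℝ)+2)*(2*m+1)*bt0r (m+2) * tT m ((k : ℝ)+1)
      - 2*bt2r (m+2) * tT (m+1) ((k : ℝ)+1)
      - 4*((m : ℝ)+2)^5*bt1r (m+2) * tT (m+2) ((k : ℝ)+1)
      + 2*((m : ℝ)+2)^7*(m+3)^7*bt0r (m+1) * tT (m+3) ((k : ℝ)+1)
      = gG m (((k+1 : ℕ) : ℝ) + 1) - gG m ((k : ℝ)+1) := by
    intro k _
    rw [telescope m (by simp)]
    push_cast
    rfl
  rw [Finset.sum_congr rfl hs, Finset.sum_range_sub (fun k : ℕ => gG m ((k : ℝ)+1))]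
  simp [gG_one]

/-- The sequence `{r̃_n}` satisfies the difference equation (9) for every integer `n ≥ 2`. -/
theorem stmt10 :
    ∀ n : ℕ, 2 ≤ n →
      (n : ℝ)^3*((n : ℝ) + 1)^3 * bt0r ((n : ℝ) - 1) * rt (n+1) - 2*(n : ℝ)*bt1r (n : ℝ) * rt n
        - bt2r (n : ℝ) * rt (n-1)
        + 2*(n : ℝ)*((n : ℝ) - 1)^4*(2*(n : ℝ) - 3) * bt0r (n : ℝ) * rt (n-2) = 0 := by
  intro n hn
  obtain ⟨m, rfl⟩ : ∃ m, n = m + 2 := ⟨n - 2, by omega⟩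
  have h := tsum_telescope m
  rw [show m + 2 + 1 = m + 3 from rfl, show m + 2 - 1 = m + 1 from rfl,
    show m + 2 - 2 = m from rfl, rt_eq, rt_eq, rt_eq, rt_eq]
  simp only [Nat.factorial_succ]
  push_cast
  rw [show (m : ℝ) + 2 - 1 = m + 1 by ring]
  generalize bt0r ((m : ℝ)+2) = a0 at *
  generalize bt0r ((m : ℝ)+1) = a1 at *
  generalize bt1r ((m : ℝ)+2) = a2 at *
  generalize bt2r ((m : ℝ)+2) = a3 at *
  linear_combination (-(m.factorial : ℝ)^4 * ((m : ℝ)+1)^4 / 2) * h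
end
end

section
/- One has lim_{n→∞} (log|r̃_n|)/n = log λ1 and lim_{n→∞} (log|ũ_n|)/n = lim_{n→∞} (log|w̃_n|)/n = lim_{n→∞} (log|ṽ_n|)/n = log λ3, where λ1, λ2, λ3 are the three real roots of λ^3 − 188λ^2 − 2368λ + 4 ordered by increasing absolute value (λ1 is the unique root in (0,1) and λ3 the unique root greater than 1). -/
noncomputable section

open Filter


def bt0 (x : ℚ) : ℚ := 41218*x^7 + 35648*x^6 - 932*x^5 - 13190*x^4 - 5128*x^3
  + 811*x^2 + 957*x + 174

def bt1 (x : ℚ) : ℚ := 3874492*x^12 - 14084302*x^11 + 12425954*x^10 + 8641603*x^9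
  - 15230839*x^8 - 1369195*x^7 + 8618417*x^6 - 623249*x^5 - 2785973*x^4
  + 308165*x^3 + 495325*x^2 - 40670*x - 37632

def bt2 (x : ℚ) : ℚ := 2*(48802112*x^13 - 201803328*x^12 + 267014032*x^11 - 69927236*x^10
  - 95912858*x^9 + 37524471*x^8 + 30257812*x^7 - 9523224*x^6 - 8524312*x^5
  + 2138687*x^4 + 1507490*x^3 - 398634*x^2 - 111012*x + 33408)

/-- The auxiliary difference equation (9), imposed for all integers `n ≥ 2`. -/
def Rec3 (y : ℕ → ℚ) : Prop := ∀ n : ℕ, 2 ≤ n →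
  (n : ℚ)^3*((n : ℚ) + 1)^3 * bt0 ((n : ℚ) - 1) * y (n+1) - 2*(n : ℚ)*bt1 (n : ℚ) * y n
    - bt2 (n : ℚ) * y (n-1)
    + 2*(n : ℚ)*((n : ℚ) - 1)^4*(2*(n : ℚ) - 3) * bt0 (n : ℚ) * y (n-2) = 0

/-! ### General limit lemmas -/

/-- If consecutive ratios tend to `l > 0`, then `log y_n / n` tends to `log l`. -/
lemma log_div_of_ratio (y : ℕ → ℝ) (l : ℝ) (hl : 0 < l) (N : ℕ) (hy : ∀ n, N ≤ n → 0 < y n)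
    (h : Tendsto (fun n => y (n+1) / y n) atTop (nhds l)) :
    Tendsto (fun n : ℕ => Real.log (y n) / (n : ℝ)) atTop (nhds (Real.log l)) := by
  have h1 : Tendsto (fun n => Real.log (y (n+1)) - Real.log (y n)) atTop (nhds (Real.log l)) := by
    have := (Real.continuousAt_log hl.ne').tendsto.comp h
    refine this.congr' ?_
    filter_upwards [eventually_ge_atTop N] with n hn
    simp only [Function.comp]
    rw [Real.log_div (hy _ (by omega)).ne' (hy _ hn).ne']
  have h2 := h1.cesaro
  have h3 : Tendsto (fun n : ℕ => Real.log (y 0) / (n : ℝ)) atTop (nhds 0) :=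
    tendsto_const_div_atTop_nhds_zero_nat _
  have h4 := h2.add h3
  rw [add_zero] at h4
  refine h4.congr ?_
  intro n
  rw [Finset.sum_range_sub (fun n => Real.log (y n))]
  ring

lemma tendsto_zero_of_contract (E ε : ℕ → ℝ) (ρ : ℝ) (h0 : 0 ≤ ρ) (h1 : ρ < 1)
    (hE : ∀ n, 0 ≤ E n) (hε : Tendsto ε atTop (nhds 0))
    (h : ∀ᶠ n in atTop, E (n+1) ≤ ρ * E n + ε n) : Tendsto E atTop (nhds 0) := by
  rw [Metric.tendsto_atTop]
  intro δ hδ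
  have hev : ∀ᶠ n in atTop, ε n ≤ (δ/2) * (1 - ρ) := by
    have : (0:ℝ) < (δ/2) * (1 - ρ) := by
      have : 0 < 1 - ρ := by linarith
      positivity
    exact (hε.eventually (gt_mem_nhds this)).mono fun n hn => le_of_lt hn
  obtain ⟨N, hN⟩ := eventually_atTop.1 (h.and hev)
  have key : ∀ m, E (N+m) ≤ δ/2 + ρ^m * E N := by
    intro m
    induction m with
    | zero => simp; positivity
    | succ m ih =>
      have := hN (N+m) (by omega)
      have h3 : ρ * E (N+m) ≤ ρ * (δ/2 + ρ^m * E N) := mul_le_mul_of_nonneg_left ih h0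
      have : E (N+(m+1)) ≤ ρ * E (N+m) + (δ/2) * (1 - ρ) := by
        have h5 := this.1
        rw [← add_assoc]; linarith [this.2]
      calc _ ≤ _ := this
        _ ≤ ρ * (δ/2 + ρ^m * E N) + (δ/2) * (1 - ρ) := by linarith
        _ = _ := by ring
  have hp : Tendsto (fun m => ρ^m * E N) atTop (nhds 0) := by
    simpa using (tendsto_pow_atTop_nhds_zero_of_lt_one h0 h1).mul_const (E N)
  obtain ⟨M, hM⟩ := eventually_atTop.1 (hp.eventually (gt_mem_nhds (half_pos hδ)))
  refine ⟨N + M, fun n hn => ?_⟩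
  obtain ⟨m, rfl⟩ := Nat.exists_eq_add_of_le (show N ≤ n by omega)
  have := key m
  have h6 := hM m (by omega)
  rw [Real.dist_eq, sub_zero, abs_of_nonneg (hE _)]
  linarith

/-! ### The third-order recurrence -/

lemma ratio_limit (y α β γ : ℕ → ℝ) (l : ℝ) (hl : 100 ≤ l)
    (hroot : l^3 - 188*l^2 - 2368*l + 4 = 0)
    (hrec : ∀ n, y (n+3) = α n * y (n+2) + β n * y (n+1) - γ n * y n)
    (hα : ∀ n, 100 ≤ α n) (hγ : ∀ n, 0 ≤ γ n) (hβ : ∀ n, γ n ≤ β n)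
    (lα : Tendsto α atTop (nhds 188)) (lβ : Tendsto β atTop (nhds 2368))
    (lγ : Tendsto γ atTop (nhds 4))
    (h1 : 0 < y 1) (h01 : y 0 ≤ y 1) (h12 : 100 * y 1 ≤ y 2) :
    Tendsto (fun n : ℕ => Real.log |y n| / (n : ℝ)) atTop (nhds (Real.log l)) := by
  have key : ∀ n, y n ≤ y (n+1) ∧ 0 < y (n+1) ∧ 100 * y (n+1) ≤ y (n+2) := by
    intro n
    induction n with
    | zero => exact ⟨h01, h1, h12⟩
    | succ n ih =>
      obtain ⟨a, b, c⟩ := ih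
      have hp : 0 < y (n+2) := by linarith
      refine ⟨by linarith, hp, ?_⟩
      have e := hrec n
      have t1 : 100 * y (n+2) ≤ α n * y (n+2) := mul_le_mul_of_nonneg_right (hα n) hp.le
      have t2 : γ n * y (n+1) ≤ β n * y (n+1) := mul_le_mul_of_nonneg_right (hβ n) b.le
      have t3 : γ n * y n ≤ γ n * y (n+1) := mul_le_mul_of_nonneg_left a (hγ n)
      show 100 * y (n+2) ≤ y (n+3)
      linarith
  have hpos : ∀ n, 1 ≤ n → 0 < y n := by
    intro n hn
    obtain ⟨m, rfl⟩ := Nat.exists_eq_add_of_le' hn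
    exact (key m).2.1
  -- ratios, shifted
  set q : ℕ → ℝ := fun n => y (n+2) / y (n+1) with hq
  have hq100 : ∀ n, 100 ≤ q n := by
    intro n
    rw [hq]; simp only
    rw [le_div_iff₀ (key n).2.1]
    exact (key n).2.2
  have hqrec : ∀ n, q (n+2) = α (n+1) + β (n+1) / q (n+1) - γ (n+1) / (q (n+1) * q n) := by
    intro n
    have e := hrec (n+1)
    have p1 := (key n).2.1
    have p2 := (key (n+1)).2.1
    have p3 := (key (n+2)).2.1
    simp only [hq]
    simp only [add_assoc, Nat.reduceAdd] at *
    rw [e]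
    field_simp
  have hl0 : (0:ℝ) < l := by linarith
  have hfix : l = 188 + 2368 / l - 4 / (l*l) := by
    field_simp
    linarith
  set ε : ℕ → ℝ := fun n => |α (n+1) - 188| + |β (n+1) - 2368| + |γ (n+1) - 4| with hε
  have lε : Tendsto ε atTop (nhds 0) := by
    have a1 := ((tendsto_add_atTop_iff_nat 1).2 lα).sub_const 188
    have a2 := ((tendsto_add_atTop_iff_nat 1).2 lβ).sub_const 2368
    have a3 := ((tendsto_add_atTop_iff_nat 1).2 lγ).sub_const 4
    simpa using (a1.abs.add a2.abs).add a3.abs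
  have inv : ∀ n, |1 / q n - 1 / l| ≤ |q n - l| / 10000 := by
    intro n
    have h := hq100 n
    have hqp : 0 < q n := by linarith
    rw [show 1 / q n - 1 / l = -(q n - l) / (q n * l) by field_simp; ring, abs_div, abs_neg,
      abs_of_pos (mul_pos hqp hl0)]
    apply div_le_div_of_nonneg_left (abs_nonneg _) (by norm_num)
    nlinarith
  have hstep : ∀ n, |q (n+2) - l| ≤ 1/4 * |q (n+1) - l| + 1/4 * |q n - l| + ε n := by
    intro n
    have i1 := inv (n+1)
    have i0 := inv n
    set u := 1 / q (n+1) with hu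
    set v := 1 / q n with hv
    set w := 1 / l with hw
    have bu : |u| ≤ 1 / 100 := by
      have := hq100 (n+1)
      rw [hu, abs_of_pos (by positivity)]
      exact one_div_le_one_div_of_le (by norm_num) this
    have bv : |v| ≤ 1 / 100 := by
      have := hq100 n
      rw [hv, abs_of_pos (by positivity)]
      exact one_div_le_one_div_of_le (by norm_num) this
    have bw : |w| ≤ 1 / 100 := by
      rw [hw, abs_of_pos (by positivity)]
      exact one_div_le_one_div_of_le (by norm_num) hl
    have e : q (n+2) - l = (α (n+1) - 188) + (β (n+1) - 2368) * u + 2368 * (u - w)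
        - (γ (n+1) - 4) * (u * v) - 4 * ((u - w) * v + w * (v - w)) := by
      rw [hqrec n]
      nth_rewrite 1 [hfix]
      have p1 := hq100 (n+1)
      have p0 := hq100 n
      have p1' : q (n+1) ≠ 0 := by positivity
      have p0' : q n ≠ 0 := by positivity
      rw [hu, hv, hw]
      field_simp
      ring
    have m1 : |(β (n+1) - 2368) * u| ≤ |β (n+1) - 2368| := by
      rw [abs_mul]; nlinarith [abs_nonneg (β (n+1) - 2368)]
    have muv : |u * v| ≤ 1 := by
      rw [abs_mul]; nlinarith [abs_nonneg u, abs_nonneg v]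
    have m2 : |(γ (n+1) - 4) * (u * v)| ≤ |γ (n+1) - 4| := by
      rw [abs_mul]; nlinarith [abs_nonneg (γ (n+1) - 4)]
    have m3 : |(u - w) * v| ≤ |u - w| / 100 := by
      rw [abs_mul]; nlinarith [abs_nonneg (u - w)]
    have m4 : |w * (v - w)| ≤ |v - w| / 100 := by
      rw [abs_mul]; nlinarith [abs_nonneg (v - w)]
    have A1 := abs_nonneg (q (n+1) - l)
    have A0 := abs_nonneg (q n - l)
    simp only [hε]
    rw [e]
    rw [abs_le]
    have z0 := abs_le.1 (le_refl |α (n+1) - 188|)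
    have z1 := abs_le.1 m1
    have z2 := abs_le.1 m2
    have z3 := abs_le.1 m3
    have z4 := abs_le.1 m4
    have z5 := abs_le.1 (le_refl |u - w|)
    constructor <;> linarith [z0.1, z0.2, z1.1, z1.2, z2.1, z2.2, z3.1, z3.2, z4.1, z4.2, z5.1, z5.2]
  have hEt : Tendsto (fun n => |q (n+1) - l| + 1/2 * |q n - l|) atTop (nhds 0) := by
    refine tendsto_zero_of_contract _ ε (3/4) (by norm_num) (by norm_num) ?_ lε ?_
    · intro n; positivity
    · refine Eventually.of_forall fun n => ?_
      have := hstep n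
      have A0 := abs_nonneg (q n - l)
      show |q (n+2) - l| + 1/2 * |q (n+1) - l| ≤ _
      linarith
  have hqt : Tendsto (fun n => q (n+1)) atTop (nhds l) := by
    rw [tendsto_iff_norm_sub_tendsto_zero]
    refine squeeze_zero (fun n => norm_nonneg _) (fun n => ?_) hEt
    rw [Real.norm_eq_abs]
    have A0 := abs_nonneg (q n - l)
    linarith
  have hrat : Tendsto (fun n => y (n+1) / y n) atTop (nhds l) := by
    rw [← tendsto_add_atTop_iff_nat 2]
    exact hqt
  refine (log_div_of_ratio y l hl0 1 hpos hrat).congr' ?_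
  filter_upwards [eventually_ge_atTop 1] with n hn
  rw [abs_of_pos (hpos n hn)]

lemma rec3_limit (y : ℕ → ℚ) (hy : Rec3 y) (l : ℝ) (hl : 1 < l)
    (hroot : l^3 - 188*l^2 - 2368*l + 4 = 0)
    (h1 : 0 < y 1) (h01 : y 0 ≤ y 1) (h12 : 100 * y 1 ≤ y 2) :
    Tendsto (fun n : ℕ => Real.log |(y n : ℝ)| / (n : ℝ)) atTop (nhds (Real.log l)) := by
  have hl100 : 100 ≤ l := by
    by_contra hc
    push Not at hc
    nlinarith [mul_pos (pow_pos (by linarith : (0:ℝ) < l) 2) (by linarith : 0 < 188 - l)]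
  set d : ℕ → ℚ := fun n => ((n+2:ℕ) : ℚ)^3*(((n+2:ℕ) : ℚ) + 1)^3 * bt0 (((n+2:ℕ) : ℚ) - 1) with hd
  set A : ℕ → ℚ := fun n => 2*((n+2:ℕ) : ℚ)*bt1 ((n+2:ℕ) : ℚ) with hA
  set B : ℕ → ℚ := fun n => bt2 ((n+2:ℕ) : ℚ) with hB
  set C : ℕ → ℚ := fun n => 2*((n+2:ℕ) : ℚ)*(((n+2:ℕ) : ℚ) - 1)^4*(2*((n+2:ℕ) : ℚ) - 3)
    * bt0 ((n+2:ℕ) : ℚ) with hC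
  have hd0 : ∀ n, 0 < d n := by
    intro n
    simp only [hd, bt0]
    push_cast
    ring_nf
    positivity
  have hA0 : ∀ n, 100 * d n ≤ A n := by
    intro n
    rw [← sub_nonneg]
    simp only [hd, hA, bt0, bt1]
    push_cast
    ring_nf
    positivity
  have hC0 : ∀ n, 0 ≤ C n := by
    intro n
    simp only [hC, bt0]
    push_cast
    ring_nf
    positivity
  have hB0 : ∀ n, C n ≤ B n := by
    intro n
    rw [← sub_nonneg]
    simp only [hC, hB, bt0, bt2]
    push_cast
    ring_nf
    positivity
  have tinv : Tendsto (fun n : ℕ => ((n:ℝ) + 2)⁻¹) atTop (nhds 0) := by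
    apply tendsto_inv_atTop_zero.comp
    exact tendsto_atTop_add_const_right _ _ tendsto_natCast_atTop_atTop
  have lim : ∀ (N D : ℝ → ℝ) (a : ℝ), Continuous N → Continuous D → D 0 ≠ 0 → N 0 / D 0 = a →
      Tendsto (fun n : ℕ => N (((n:ℝ) + 2)⁻¹) / D (((n:ℝ) + 2)⁻¹)) atTop (nhds a) := by
    intro N D a hN hD h0 ha
    rw [← ha]
    exact ((hN.tendsto 0).comp tinv).div ((hD.tendsto 0).comp tinv) h0
  let D0 : ℝ → ℝ := fun t => (1+t)^3 * (41218*(1-t)^7 + 35648*(1-t)^6*t - 932*(1-t)^5*t^2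
    - 13190*(1-t)^4*t^3 - 5128*(1-t)^3*t^4 + 811*(1-t)^2*t^5 + 957*(1-t)*t^6 + 174*t^7)
  have hD0 : ∀ n : ℕ, ((d n : ℚ) : ℝ) = ((n:ℝ)+2)^13 * D0 (((n:ℝ) + 2)⁻¹) := by
    intro n
    have : (n:ℝ) + 2 ≠ 0 := by positivity
    simp only [hd, D0, bt0]
    push_cast
    field_simp
  have lα : Tendsto (fun n => ((A n : ℚ) : ℝ) / ((d n : ℚ) : ℝ)) atTop (nhds 188) := by
    refine (lim (fun t => 2 * (3874492 - 14084302*t + 12425954*t^2 + 8641603*t^3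
      - 15230839*t^4 - 1369195*t^5 + 8618417*t^6 - 623249*t^7 - 2785973*t^8
      + 308165*t^9 + 495325*t^10 - 40670*t^11 - 37632*t^12)) D0 188 (by fun_prop)
      (by simp only [D0]; fun_prop) (by simp [D0]) (by norm_num [D0])).congr ?_
    intro n
    have h2 : (n:ℝ) + 2 ≠ 0 := by positivity
    rw [hD0, ← mul_div_mul_left _ _ (pow_ne_zero 13 h2)]
    congr 1
    simp only [hA, bt1]
    push_cast
    field_simp
  have lβ : Tendsto (fun n => ((B n : ℚ) : ℝ) / ((d n : ℚ) : ℝ)) atTop (nhds 2368) := by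
    refine (lim (fun t => 2*(48802112 - 201803328*t + 267014032*t^2 - 69927236*t^3
      - 95912858*t^4 + 37524471*t^5 + 30257812*t^6 - 9523224*t^7 - 8524312*t^8
      + 2138687*t^9 + 1507490*t^10 - 398634*t^11 - 111012*t^12 + 33408*t^13)) D0 2368 (by fun_prop)
      (by simp only [D0]; fun_prop) (by simp [D0]) (by norm_num [D0])).congr ?_
    intro n
    have h2 : (n:ℝ) + 2 ≠ 0 := by positivity
    rw [hD0, ← mul_div_mul_left _ _ (pow_ne_zero 13 h2)]
    congr 1
    simp only [hB, bt2]
    push_cast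
    field_simp
  have lγ : Tendsto (fun n => ((C n : ℚ) : ℝ) / ((d n : ℚ) : ℝ)) atTop (nhds 4) := by
    refine (lim (fun t => 2*(1-t)^4*(2-3*t)*(41218 + 35648*t - 932*t^2 - 13190*t^3 - 5128*t^4
      + 811*t^5 + 957*t^6 + 174*t^7)) D0 4 (by fun_prop)
      (by simp only [D0]; fun_prop) (by simp [D0]) (by norm_num [D0])).congr ?_
    intro n
    have h2 : (n:ℝ) + 2 ≠ 0 := by positivity
    rw [hD0, ← mul_div_mul_left _ _ (pow_ne_zero 13 h2)]
    congr 1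
    simp only [hC, bt0]
    push_cast
    field_simp
  have dR : ∀ n, (0:ℝ) < ((d n : ℚ) : ℝ) := fun n => by exact_mod_cast hd0 n
  refine ratio_limit (fun n => (y n : ℝ)) _ _ _ l hl100 hroot ?_ ?_ ?_ ?_ lα lβ lγ ?_ ?_ ?_
  · intro n
    have e := hy (n+2) (by omega)
    have e' : d n * y (n+3) - A n * y (n+2) - B n * y (n+1) + C n * y n = 0 := e
    have e2 : ((d n : ℚ) : ℝ) * y (n+3) - (A n : ℚ) * y (n+2) - (B n : ℚ) * y (n+1)
      + (C n : ℚ) * y n = 0 := by exact_mod_cast e'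
    have := (dR n).ne'
    field_simp
    linarith
  · intro n
    rw [le_div_iff₀ (dR n)]
    exact_mod_cast hA0 n
  · intro n
    exact div_nonneg (by exact_mod_cast hC0 n) (dR n).le
  · intro n
    exact div_le_div_of_nonneg_right (by exact_mod_cast hB0 n) (dR n).le
  · exact_mod_cast h1
  · exact_mod_cast h01
  · exact_mod_cast h12

/-! ### The very-well-poised series -/

/-- The summand of `rt`, as a function of the original index `k`. -/
def aT (n k : ℕ) : ℝ := ((k : ℝ) + (n : ℝ)/2)
    * (∏ j ∈ Finset.range (n+1), ((k : ℝ) - (j : ℝ)))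
    * (∏ j ∈ Finset.range (n+1), ((k : ℝ) + (n : ℝ) + (j : ℝ)))
    / (∏ j ∈ Finset.range (n+1), ((k : ℝ) + (j : ℝ))^6)

/-- The summand weighted by `n!^4 k^2`. -/
def bT (n k : ℕ) : ℝ := (Nat.factorial n : ℝ)^4 * (k:ℝ)^2 * aT n k

lemma aT_zero (n k : ℕ) (h : k ≤ n) : aT n k = 0 := by
  have : ∏ j ∈ Finset.range (n+1), ((k : ℝ) - (j : ℝ)) = 0 :=
    Finset.prod_eq_zero (Finset.mem_range.2 (Nat.lt_succ_of_le h)) (sub_self _)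
  simp [aT, this]

lemma aT_pos (n k : ℕ) (h : n < k) : 0 < aT n k := by
  have hk : (0:ℝ) < k := by exact_mod_cast (by omega : 0 < k)
  unfold aT
  apply div_pos
  · apply mul_pos
    · apply mul_pos (by positivity)
      apply Finset.prod_pos
      intro j hj
      have : j < k := by have := Finset.mem_range.1 hj; omega
      have : (j:ℝ) < k := by exact_mod_cast this
      linarith
    · apply Finset.prod_pos
      intro j hj
      positivity
  · apply Finset.prod_pos
    intro j hj
    positivity

lemma aT_nonneg (n k : ℕ) : 0 ≤ aT n k := by
  rcases Nat.lt_or_ge n k with h | h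
  · exact (aT_pos n k h).le
  · exact (aT_zero n k h).ge

lemma bT_pos (n k : ℕ) (h : n < k) : 0 < bT n k := by
  have := aT_pos n k h
  have hk : (0:ℝ) < k := by exact_mod_cast (by omega : 0 < k)
  have : (0:ℝ) < Nat.factorial n := by exact_mod_cast Nat.factorial_pos n
  unfold bT
  positivity

lemma bT_zero (n k : ℕ) (h : k ≤ n) : bT n k = 0 := by
  simp [bT, aT_zero n k h]

lemma bT_nonneg (n k : ℕ) : 0 ≤ bT n k := by
  have := aT_nonneg n k
  unfold bT
  positivity

lemma prod_shift (x : ℝ) (n : ℕ) :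
    (∏ j ∈ Finset.range (n+1), (x + 1 + (j : ℝ))) * x
      = (∏ j ∈ Finset.range (n+1), (x + (j : ℝ))) * (x + n + 1) := by
  have h1 := Finset.prod_range_succ (fun j : ℕ => x + (j:ℝ)) (n+1)
  have h2 := Finset.prod_range_succ' (fun j : ℕ => x + (j:ℝ)) (n+1)
  rw [h1] at h2
  simp only [Nat.cast_add, Nat.cast_one, Nat.cast_zero, add_zero] at h2
  rw [add_assoc x (n:ℝ) 1, h2]
  congr 1
  apply Finset.prod_congr rfl
  intro j _
  ring

lemma prod_shift_neg (x : ℝ) (n : ℕ) :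
    (∏ j ∈ Finset.range (n+1), (x + 1 - (j : ℝ))) * (x - n)
      = (∏ j ∈ Finset.range (n+1), (x - (j : ℝ))) * (x + 1) := by
  have h1 := Finset.prod_range_succ (fun j : ℕ => x + 1 - (j:ℝ)) (n+1)
  have h2 := Finset.prod_range_succ' (fun j : ℕ => x + 1 - (j:ℝ)) (n+1)
  rw [h1] at h2
  simp only [Nat.cast_add, Nat.cast_one, Nat.cast_zero, sub_zero] at h2
  rw [show x - (n:ℝ) = x + 1 - (n + 1) by ring, h2]
  congr 1
  apply Finset.prod_congr rfl
  intro j _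
  ring

lemma bT_step_k (n k : ℕ) (hk : 1 ≤ k) :
    bT n (k+1) * (((k:ℝ) - n) * (k + (n:ℝ)/2) * (k + n) * (k + n + 1)^6)
      = bT n k * ((k+1)^3 * (k + 1 + (n:ℝ)/2) * (k + 2*n + 1) * (k:ℝ)^4) := by
  have hk0 : (0:ℝ) < k := by exact_mod_cast hk
  have e1 := prod_shift_neg (k:ℝ) n
  have e2 := prod_shift ((k:ℝ) + n) n
  have e3 := prod_shift (k:ℝ) n
  have hD : (0:ℝ) < ∏ j ∈ Finset.range (n+1), ((k:ℝ) + (j : ℝ)) :=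
    Finset.prod_pos fun j _ => by positivity
  have hD' : (0:ℝ) < ∏ j ∈ Finset.range (n+1), ((k:ℝ) + 1 + (j : ℝ)) :=
    Finset.prod_pos fun j _ => by positivity
  have e2' : ∏ j ∈ Finset.range (n+1), ((k:ℝ) + 1 + n + (j : ℝ))
    = ∏ j ∈ Finset.range (n+1), ((k:ℝ) + n + 1 + (j : ℝ)) :=
    Finset.prod_congr rfl fun j _ => by ring
  unfold bT aT
  simp only [Finset.prod_pow]
  push_cast
  rw [e2']
  set P := ∏ j ∈ Finset.range (n+1), ((k:ℝ) - (j : ℝ))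
  set P' := ∏ j ∈ Finset.range (n+1), ((k:ℝ) + 1 - (j : ℝ))
  set Q := ∏ j ∈ Finset.range (n+1), ((k:ℝ) + n + (j : ℝ))
  set Q' := ∏ j ∈ Finset.range (n+1), ((k:ℝ) + n + 1 + (j : ℝ))
  set D := ∏ j ∈ Finset.range (n+1), ((k:ℝ) + (j : ℝ))
  set D' := ∏ j ∈ Finset.range (n+1), ((k:ℝ) + 1 + (j : ℝ))
  have e3' : (D' * k)^6 = (D * (k + n + 1))^6 := by rw [e3]
  rw [← mul_div_assoc, ← mul_div_assoc, div_mul_eq_mul_div, div_mul_eq_mul_div,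
    div_eq_div_iff (by positivity) (by positivity)]
  have hk6 : ((k:ℝ))^2 ≠ 0 := by positivity
  calc _ = ((Nat.factorial n : ℝ)^4 * (k+1)^2 * (k + 1 + (n:ℝ)/2) * (k + (n:ℝ)/2))
        * (P' * (k - n)) * (Q' * (k + n)) * (D * (k + n + 1))^6 := by ring
    _ = ((Nat.factorial n : ℝ)^4 * (k+1)^2 * (k + 1 + (n:ℝ)/2) * (k + (n:ℝ)/2))
        * (P * (k + 1)) * (Q * (k + n + n + 1)) * (D' * k)^6 := by rw [e1, e2, e3']
    _ = _ := by ring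

lemma bT_step_n (n k : ℕ) (hk : 1 ≤ k) :
    bT (n+1) k = bT n k * (((n:ℝ)+1)^4 * (k + ((n:ℝ)+1)/2) * (k - n - 1) * (k + 2*n + 1)
      * (k + 2*n + 2) / ((k + (n:ℝ)/2) * (k + n) * (k + n + 1)^6)) := by
  have hk0 : (0:ℝ) < k := by exact_mod_cast hk
  have e2 := prod_shift ((k:ℝ) + n) (n+1)
  rw [Finset.prod_range_succ (fun j : ℕ => (k:ℝ) + n + (j:ℝ)) (n+1)] at e2
  have hD : (0:ℝ) < ∏ j ∈ Finset.range (n+1), ((k:ℝ) + (j : ℝ)) :=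
    Finset.prod_pos fun j _ => by positivity
  have e2' : ∏ j ∈ Finset.range (n+1+1), ((k:ℝ) + ((n+1 : ℕ) : ℝ) + (j : ℝ))
    = ∏ j ∈ Finset.range (n+1+1), ((k:ℝ) + n + 1 + (j : ℝ)) :=
    Finset.prod_congr rfl fun j _ => by push_cast; ring
  unfold bT aT
  simp only [Finset.prod_pow]
  rw [e2', Finset.prod_range_succ (fun j : ℕ => (k:ℝ) - (j:ℝ)) (n+1),
    Finset.prod_range_succ (fun j : ℕ => (k:ℝ) + (j:ℝ)) (n+1), Nat.factorial_succ]
  push_cast at *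
  set P := ∏ j ∈ Finset.range (n+1), ((k:ℝ) - (j : ℝ))
  set Q := ∏ j ∈ Finset.range (n+1), ((k:ℝ) + n + (j : ℝ))
  set Q' := ∏ j ∈ Finset.range (n+1+1), ((k:ℝ) + n + 1 + (j : ℝ))
  set D := ∏ j ∈ Finset.range (n+1), ((k:ℝ) + (j : ℝ))
  have hQ : Q' = Q * (k + n + (n+1)) * (k + n + (n + 1) + 1) / (k + n) := by
    rw [eq_div_iff (by positivity)]; exact e2
  rw [hQ]
  have h1 : (k:ℝ) + (n:ℝ)/2 ≠ 0 := by positivity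
  have h2 : (k:ℝ) + n ≠ 0 := by positivity
  have h3 : (k:ℝ) + n + 1 ≠ 0 := by positivity
  have h4 : (k:ℝ) + (n + 1) ≠ 0 := by positivity
  rw [← add_assoc (k:ℝ) (n:ℝ) 1]
  field_simp
  ring

lemma bT_max (n : ℕ) (hn : 1 ≤ n) : ∃ k, n < k ∧ k ≤ 2*n ∧ ∀ j, bT n j ≤ bT n k := by
  obtain ⟨k, hk, hmax⟩ := Finset.exists_max_image (Finset.Ioc n (2*n)) (bT n)
    ⟨n+1, by simp; omega⟩
  rw [Finset.mem_Ioc] at hk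
  refine ⟨k, hk.1, hk.2, ?_⟩
  have tail : ∀ s, bT n (2*n+s) ≤ bT n k := by
    intro s
    induction s with
    | zero => exact hmax _ (by simp; omega)
    | succ s ih =>
      refine le_trans ?_ ih
      have e := bT_step_k n (2*n+s) (by omega)
      have hp := bT_pos n (2*n+s) (by omega)
      obtain ⟨m, rfl⟩ := Nat.exists_eq_add_of_le' hn
      set Bp := bT (m+1) (2*(m+1)+s)
      set Bn := bT (m+1) (2*(m+1)+(s+1))
      have hX : (0:ℝ) < (((2*(m+1)+s : ℕ):ℝ) - (m+1:ℕ)) * ((2*(m+1)+s : ℕ) + ((m+1:ℕ):ℝ)/2)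
          * ((2*(m+1)+s : ℕ) + (m+1:ℕ)) * ((2*(m+1)+s : ℕ) + (m+1:ℕ) + 1)^6 := by
        have : (0:ℝ) < (((2*(m+1)+s : ℕ):ℝ) - (m+1:ℕ)) := by
          push_cast; ring_nf; positivity
        positivity
      have hXY : (((2*(m+1)+s : ℕ):ℝ)+1)^3 * ((2*(m+1)+s : ℕ) + 1 + ((m+1:ℕ):ℝ)/2)
          * ((2*(m+1)+s : ℕ) + 2*(m+1:ℕ) + 1) * ((2*(m+1)+s : ℕ):ℝ)^4 ≤
          (((2*(m+1)+s : ℕ):ℝ) - (m+1:ℕ)) * ((2*(m+1)+s : ℕ) + ((m+1:ℕ):ℝ)/2)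
          * ((2*(m+1)+s : ℕ) + (m+1:ℕ)) * ((2*(m+1)+s : ℕ) + (m+1:ℕ) + 1)^6 := by
        rw [← sub_nonneg]
        push_cast
        ring_nf
        positivity
      have h2 := mul_le_mul_of_nonneg_left hXY hp.le
      rw [← e] at h2
      exact le_of_mul_le_mul_right h2 hX
  intro j
  rcases Nat.lt_or_ge n j with h | h
  · rcases Nat.lt_or_ge (2*n) j with h' | h'
    · obtain ⟨s, rfl⟩ := Nat.exists_eq_add_of_le h'.le
      exact tail s
    · exact hmax j (by simp; omega)
  · rw [bT_zero n j h]; exact bT_nonneg n k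

/-- The limiting critical-point polynomial. -/
def gP (x : ℝ) : ℝ := 2*x^6 + 6*x^5 + 4*x^4 - 2*x^3 - 6*x^2 - 4*x - 1

lemma gP_inj (x y : ℝ) (hx : 1 ≤ x) (hy : 1 ≤ y) (h : gP x = 0) (h' : gP y = 0) : x = y := by
  have main : ∀ a b : ℝ, 1 ≤ a → a < b → gP a < gP b := by
    intro a b ha hab
    obtain ⟨s, rfl⟩ : ∃ s, a = s + 1 := ⟨a - 1, by ring⟩
    obtain ⟨d, rfl⟩ : ∃ d, b = s + 1 + d := ⟨b - (s+1), by ring⟩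
    have hs : 0 ≤ s := by linarith
    have hd : 0 < d := by linarith
    rw [← sub_pos]
    unfold gP
    ring_nf
    positivity
  rcases lt_trichotomy x y with h1 | h1 | h1
  · have := main x y hx h1; linarith
  · exact h1
  · have := main y x hy h1; linarith

lemma gP_root : ∃ x : ℝ, 1 < x ∧ gP x = 0 := by
  have hc : ContinuousOn gP (Set.Icc 1 2) := by unfold gP; fun_prop
  have := intermediate_value_Icc (by norm_num : (1:ℝ) ≤ 2) hc
  obtain ⟨x, hx, h⟩ := this (show (0:ℝ) ∈ Set.Icc (gP 1) (gP 2) by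
    constructor <;> norm_num [gP])
  refine ⟨x, lt_of_le_of_ne hx.1 ?_, h⟩
  rintro rfl
  norm_num [gP] at h

lemma lam_eq (x l : ℝ) (hx : 1 < x) (hg : gP x = 0) (hl : l ∈ Set.Ioo (0:ℝ) 1)
    (hroot : l^3 - 188*l^2 - 2368*l + 4 = 0) : (x-1)*(x+2)^2/(x+1)^7 = l := by
  set m := (x-1)*(x+2)^2/(x+1)^7 with hm
  have hx1 : 0 < x - 1 := by linarith
  have hD : 0 < (x+1)^7 := by positivity
  have hm0 : 0 < m := by positivity
  have hm1 : m < 1 := by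
    rw [hm, div_lt_one hD, ← sub_pos]
    obtain ⟨s, rfl⟩ : ∃ s, x = s + 1 := ⟨x - 1, by ring⟩
    have hs : 0 < s := by linarith
    ring_nf
    positivity
  have hmr : m^3 - 188*m^2 - 2368*m + 4 = 0 := by
    have key : ((x-1)*(x+2)^2)^3 - 188*((x-1)*(x+2)^2)^2*(x+1)^7
      - 2368*((x-1)*(x+2)^2)*((x+1)^7)^2 + 4*((x+1)^7)^3 = gP x * ((-6404)*x^0 + (-86020)*x^1
      + (-414672)*x^2 + (-1091544)*x^3 + (-1823364)*x^4 + (-2066728)*x^5 + (-1631751)*x^6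
      + (-892783)*x^7 + (-321827)*x^8 + (-62757)*x^9 + (2016)*x^10 + (5214)*x^11 + (1666)*x^12
      + (308)*x^13 + (36)*x^14 + (2)*x^15) := by
      unfold gP; ring
    rw [hg, zero_mul] at key
    rw [hm]
    generalize (x-1)*(x+2)^2 = N at key
    generalize (x+1)^7 = D at key hD
    field_simp
    linarith
  have h : (m - l) * (m^2 + m*l + l^2 - 188*(m+l) - 2368) = 0 := by linarith
  rcases mul_eq_zero.1 h with h | h
  · linarith
  · exfalso
    nlinarith [hl.1, hl.2, mul_pos hm0 hl.1]

lemma crit_le (n k : ℕ) (hn : 1 ≤ n) (hk : n < k) (hmax : ∀ j, bT n j ≤ bT n k) :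
    ((k:ℝ)+1)^3 * (k + 1 + (n:ℝ)/2) * (k + 2*n + 1) * (k:ℝ)^4
      ≤ ((k:ℝ) - n) * (k + (n:ℝ)/2) * (k + n) * (k + n + 1)^6 := by
  have e := bT_step_k n k (by omega)
  have hp := bT_pos n k hk
  have hkn : (n:ℝ) < k := by exact_mod_cast hk
  have hX : 0 ≤ ((k:ℝ) - n) * (k + (n:ℝ)/2) * (k + n) * (k + n + 1)^6 := by
    have : 0 < (k:ℝ) - n := by linarith
    positivity
  have h := mul_le_mul_of_nonneg_right (hmax (k+1)) hX
  rw [e] at h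
  exact le_of_mul_le_mul_left h hp

lemma crit_ge (n k : ℕ) (hn : 1 ≤ n) (hk : n < k) (hmax : ∀ j, bT n j ≤ bT n k) :
    ((k:ℝ) - 1 - n) * (k - 1 + (n:ℝ)/2) * (k - 1 + n) * (k + n)^6
      ≤ (k:ℝ)^3 * (k + (n:ℝ)/2) * (k + 2*n) * ((k:ℝ)-1)^4 := by
  obtain ⟨i, rfl⟩ : ∃ i, k = i + 1 := ⟨k - 1, by omega⟩
  have e := bT_step_k n i (by omega)
  have hp := bT_pos n (i+1) hk
  have hX : 0 ≤ ((i:ℝ)+1)^3 * (i + 1 + (n:ℝ)/2) * (i + 2*n + 1) * (i:ℝ)^4 := by positivity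
  have h := mul_le_mul_of_nonneg_right (hmax i) hX
  rw [← e] at h
  have h2 := le_of_mul_le_mul_left h hp
  push_cast
  calc _ = ((i:ℝ) - n) * (i + (n:ℝ)/2) * (i + n) * (i + n + 1)^6 := by ring
    _ ≤ _ := h2
    _ = _ := by ring

lemma argmax_limit (K : ℕ → ℕ) (hK : ∀ n, 1 ≤ n → n < K n ∧ K n ≤ 2*n ∧ ∀ j, bT n j ≤ bT n (K n))
    (x0 : ℝ) (hx0 : 1 < x0) (hg : gP x0 = 0) :
    Tendsto (fun n => (K n : ℝ) / n) atTop (nhds x0) := by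
  rw [← tendsto_add_atTop_iff_nat 1]
  set X : ℕ → ℝ := fun n => (K (n+1) : ℝ) / ((n+1:ℕ):ℝ) with hX
  set T : ℕ → ℝ := fun n => 1 / ((n+1:ℕ):ℝ) with hT
  have hTlim : Tendsto T atTop (nhds 0) := by
    have := tendsto_one_div_add_atTop_nhds_zero_nat (𝕜 := ℝ)
    simpa [hT] using this
  have hXmem : ∀ n, X n ∈ Set.Icc (1:ℝ) 2 := by
    intro n
    have h := hK (n+1) (by omega)
    have h1 : ((n+1:ℕ):ℝ) ≤ K (n+1) := by exact_mod_cast h.1.le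
    have h2 : ((K (n+1) : ℕ):ℝ) ≤ 2 * ((n+1:ℕ):ℝ) := by exact_mod_cast h.2.1
    have hp : (0:ℝ) < ((n+1:ℕ):ℝ) := by positivity
    simp only [hX]
    constructor
    · rw [le_div_iff₀ hp]; linarith
    · rw [div_le_iff₀ hp]; linarith
  have hf : ∀ n, (X n + T n)^3 * (X n + T n + 1/2) * (X n + 2 + T n) * (X n)^4
      - (X n - 1) * (X n + 1/2) * (X n + 1) * (X n + 1 + T n)^6 ≤ 0 := by
    intro n
    have h := hK (n+1) (by omega)
    have c := crit_le (n+1) (K (n+1)) (by omega) h.1 h.2.2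
    have hp : (0:ℝ) < ((n+1:ℕ):ℝ) := by positivity
    simp only [hX, hT]
    generalize ((n+1:ℕ):ℝ) = N at c hp
    generalize ((K (n+1) : ℕ):ℝ) = k at c
    have : (k / N + 1 / N)^3 * (k / N + 1 / N + 1/2) * (k / N + 2 + 1 / N) * (k / N)^4
      - (k / N - 1) * (k / N + 1/2) * (k / N + 1) * (k / N + 1 + 1 / N)^6 =
      ((k+1)^3 * (k + 1 + N/2) * (k + 2*N + 1) * k^4
       - (k - N) * (k + N/2) * (k + N) * (k + N + 1)^6) / N^9 := by
      field_simp
      try ring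
    rw [this]
    exact div_nonpos_of_nonpos_of_nonneg (by linarith) (by positivity)
  have hf2 : ∀ n, 0 ≤ (X n)^3 * (X n + 1/2) * (X n + 2) * (X n - T n)^4
      - (X n - T n - 1) * (X n - T n + 1/2) * (X n - T n + 1) * (X n + 1)^6 := by
    intro n
    have h := hK (n+1) (by omega)
    have c := crit_ge (n+1) (K (n+1)) (by omega) h.1 h.2.2
    have hp : (0:ℝ) < ((n+1:ℕ):ℝ) := by positivity
    simp only [hX, hT]
    generalize ((n+1:ℕ):ℝ) = N at c hp
    generalize ((K (n+1) : ℕ):ℝ) = k at c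
    have : (k / N)^3 * (k / N + 1/2) * (k / N + 2) * (k / N - 1 / N)^4
      - (k / N - 1 / N - 1) * (k / N - 1 / N + 1/2) * (k / N - 1 / N + 1) * (k / N + 1)^6 =
      (k^3 * (k + N/2) * (k + 2*N) * (k-1)^4
       - (k - 1 - N) * (k - 1 + N/2) * (k - 1 + N) * (k + N)^6) / N^9 := by
      field_simp
      try ring
    rw [this]
    exact div_nonneg (by linarith) (by positivity)
  apply tendsto_of_subseq_tendsto
  intro ns hns
  obtain ⟨z, hz, φ, hφ, hlim⟩ := isCompact_Icc.tendsto_subseq (fun n => hXmem (ns n))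
  refine ⟨φ, ?_⟩
  have hT' : Tendsto (fun n => T (ns (φ n))) atTop (nhds 0) :=
    hTlim.comp (hns.comp hφ.tendsto_atTop)
  have hX' : Tendsto (fun n => X (ns (φ n))) atTop (nhds z) := hlim
  have hpair := hX'.prodMk_nhds hT'
  have l1 : z^3 * (z + 1/2) * (z + 2) * z^4 - (z - 1) * (z + 1/2) * (z + 1) * (z + 1)^6 ≤ 0 := by
    have hc : Continuous (fun p : ℝ × ℝ => (p.1 + p.2)^3 * (p.1 + p.2 + 1/2) * (p.1 + 2 + p.2)
      * (p.1)^4 - (p.1 - 1) * (p.1 + 1/2) * (p.1 + 1) * (p.1 + 1 + p.2)^6) := by fun_prop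
    have := le_of_tendsto' ((hc.tendsto (z, 0)).comp hpair) (fun n => hf (ns (φ n)))
    simpa using this
  have l2 : 0 ≤ z^3 * (z + 1/2) * (z + 2) * z^4 - (z - 1) * (z + 1/2) * (z + 1) * (z + 1)^6 := by
    have hc : Continuous (fun p : ℝ × ℝ => (p.1)^3 * (p.1 + 1/2) * (p.1 + 2) * (p.1 - p.2)^4
      - (p.1 - p.2 - 1) * (p.1 - p.2 + 1/2) * (p.1 - p.2 + 1) * (p.1 + 1)^6) := by fun_prop
    have := ge_of_tendsto' ((hc.tendsto (z, 0)).comp hpair) (fun n => hf2 (ns (φ n)))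
    simpa using this
  have hz0 : gP z = 0 := by
    have e : z^3 * (z + 1/2) * (z + 2) * z^4 - (z - 1) * (z + 1/2) * (z + 1) * (z + 1)^6
      = -2 * (z + 1/2)^2 * gP z := by unfold gP; ring
    rw [e] at l1 l2
    have h0 : -2 * (z + 1/2)^2 * gP z = 0 := le_antisymm l1 l2
    have hz1 := hz.1
    have : -2 * (z + 1/2)^2 ≠ 0 := by
      have : 0 < (z + 1/2)^2 := by positivity
      linarith
    exact (mul_eq_zero.1 h0).resolve_left this
  rw [gP_inj x0 z hx0.le hz.1 hg hz0]
  exact hX'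

lemma max_ratio (K : ℕ → ℕ) (hK : ∀ n, 1 ≤ n → n < K n ∧ K n ≤ 2*n ∧ ∀ j, bT n j ≤ bT n (K n))
    (x0 : ℝ) (hx0 : 1 < x0) (hg : gP x0 = 0) :
    Tendsto (fun n => bT (n+1) (K (n+1)) / bT n (K n)) atTop
      (nhds ((x0-1)*(x0+2)^2/(x0+1)^7)) := by
  have hX := argmax_limit K hK x0 hx0 hg
  have hT : Tendsto (fun n : ℕ => 1 / (n:ℝ)) atTop (nhds 0) := tendsto_one_div_atTop_nhds_zero_nat
  have hX' : Tendsto (fun n : ℕ => (K (n+1) : ℝ) / n) atTop (nhds x0) := by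
    have h1 := (tendsto_add_atTop_iff_nat 1).2 hX
    have h2 := h1.mul (hT.const_add 1)
    rw [add_zero, mul_one] at h2
    refine h2.congr' ?_
    filter_upwards [eventually_ge_atTop 1] with n hn
    have : (0:ℝ) < n := by exact_mod_cast hn
    push_cast
    field_simp
  let R : ℕ → ℝ → ℝ := fun n k => ((n:ℝ)+1)^4 * (k + ((n:ℝ)+1)/2) * (k - n - 1) * (k + 2*n + 1)
      * (k + 2*n + 2) / ((k + (n:ℝ)/2) * (k + n) * (k + n + 1)^6)
  have hR : ∀ k : ℕ → ℕ, Tendsto (fun n : ℕ => (k n : ℝ) / n) atTop (nhds x0) →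
      Tendsto (fun n => R n (k n)) atTop (nhds ((x0-1)*(x0+2)^2/(x0+1)^7)) := by
    intro k hk
    have hpair := hk.prodMk_nhds hT
    have hc : ContinuousAt (fun p : ℝ × ℝ => (1+p.2)^4 * (p.1 + (1+p.2)/2) * (p.1 - 1 - p.2)
      * (p.1 + 2 + p.2) * (p.1 + 2 + 2*p.2) / ((p.1 + 1/2) * (p.1 + 1) * (p.1 + 1 + p.2)^6))
      (x0, 0) := by
      apply ContinuousAt.div
      · fun_prop
      · fun_prop
      · simp only
        positivity
    have h := hc.tendsto.comp hpair
    have e : (1+(0:ℝ))^4 * (x0 + (1+0)/2) * (x0 - 1 - 0)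
      * (x0 + 2 + 0) * (x0 + 2 + 2*0) / ((x0 + 1/2) * (x0 + 1) * (x0 + 1 + 0)^6)
      = (x0-1)*(x0+2)^2/(x0+1)^7 := by
      have : x0 + 1/2 ≠ 0 := by positivity
      have : x0 + 1 ≠ 0 := by positivity
      rw [div_eq_div_iff (by positivity) (by positivity)]
      ring
    simp only at h
    rw [e] at h
    refine h.congr' ?_
    filter_upwards [eventually_ge_atTop 1] with n hn
    have hn0 : (0:ℝ) < n := by exact_mod_cast hn
    simp only [Function.comp, R]
    have hk0 : (0:ℝ) ≤ k n := by positivity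
    generalize ((k n : ℕ):ℝ) = κ at hk0
    generalize (n:ℝ) = N at hn0
    rw [div_eq_div_iff (by positivity) (by positivity)]
    field_simp
    try ring
  refine tendsto_of_tendsto_of_tendsto_of_le_of_le' (hR K hX) (hR (fun n => K (n+1)) hX') ?_ ?_
  · filter_upwards [eventually_ge_atTop 1] with n hn
    have h := hK n hn
    rw [le_div_iff₀ (bT_pos n _ h.1), mul_comm, ← bT_step_n n (K n) (by omega)]
    exact (hK (n+1) (by omega)).2.2 _
  · filter_upwards [eventually_ge_atTop 1] with n hn
    have h := hK n hn
    have h' := hK (n+1) (by omega)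
    rw [div_le_iff₀ (bT_pos n _ h.1), bT_step_n n (K (n+1)) (by omega), mul_comm]
    apply mul_le_mul_of_nonneg_left (h.2.2 _)
    have h1 : ((n+1:ℕ):ℝ) < K (n+1) := by exact_mod_cast h'.1
    push_cast at h1
    have h2 : (0:ℝ) < K (n+1) - n - 1 := by linarith
    have h3 : (0:ℝ) < K (n+1) := by linarith
    positivity

lemma rt_bounds (n k : ℕ) (hn : 1 ≤ n) (hk : n < k) (hk2 : k ≤ 2*n)
    (hmax : ∀ j, bT n j ≤ bT n k) :
    bT n k / (4 * (n:ℝ)^2) ≤ |rt n| ∧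
      |rt n| ≤ bT n k * ∑' i : ℕ, 1 / ((i:ℝ)+1)^2 := by
  set c : ℕ → ℝ := fun i => (Nat.factorial n : ℝ)^4 * aT n (i+1) with hc
  have hc0 : ∀ i, 0 ≤ c i := fun i => by
    have := aT_nonneg n (i+1)
    simp only [hc]; positivity
  have hrt : rt n = - ∑' i, c i := by
    unfold rt
    simp only [hc]
    rw [tsum_mul_left, neg_mul]
    simp only [aT]
    push_cast
    rfl
  have habs : |rt n| = ∑' i, c i := by
    rw [hrt, abs_neg, abs_of_nonneg (tsum_nonneg hc0)]
  have hs2 : Summable (fun i : ℕ => 1 / ((i:ℝ)+1)^2) := by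
    have := (summable_nat_add_iff 1).2 (Real.summable_one_div_nat_pow.2 (by norm_num : 1 < 2))
    simpa using this
  have hcb : ∀ i, bT n (i+1) = c i * ((i:ℝ)+1)^2 := by
    intro i
    simp only [hc, bT]
    push_cast
    ring
  have hle : ∀ i, c i ≤ bT n k * (1 / ((i:ℝ)+1)^2) := by
    intro i
    rw [mul_one_div, le_div_iff₀ (by positivity), ← hcb]
    exact hmax _
  have hsum : Summable c := Summable.of_nonneg_of_le hc0 hle (hs2.mul_left _)
  constructor
  · rw [habs]
    obtain ⟨i, rfl⟩ : ∃ i, k = i + 1 := ⟨k - 1, by omega⟩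
    refine le_trans ?_ (hsum.le_tsum i (fun j _ => hc0 j))
    have hn0 : (0:ℝ) < n := by exact_mod_cast hn
    rw [div_le_iff₀ (by positivity), hcb]
    apply mul_le_mul_of_nonneg_left _ (hc0 i)
    have : (i:ℝ)+1 ≤ 2*n := by exact_mod_cast hk2
    nlinarith [(Nat.cast_nonneg i : (0:ℝ) ≤ i)]
  · rw [habs, ← tsum_mul_left]
    exact hsum.tsum_le_tsum hle (hs2.mul_left _)

lemma rt_limit (l : ℝ) (hl : l ∈ Set.Ioo (0:ℝ) 1) (hroot : l^3 - 188*l^2 - 2368*l + 4 = 0) :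
    Tendsto (fun n : ℕ => Real.log |rt n| / (n : ℝ)) atTop (nhds (Real.log l)) := by
  have hex : ∀ n, ∃ k, 1 ≤ n → n < k ∧ k ≤ 2*n ∧ ∀ j, bT n j ≤ bT n k := by
    intro n
    by_cases hn : 1 ≤ n
    · obtain ⟨k, hk⟩ := bT_max n hn
      exact ⟨k, fun _ => hk⟩
    · exact ⟨0, fun h => absurd h hn⟩
  choose K hK using hex
  obtain ⟨x0, hx0, hg⟩ := gP_root
  have hr := max_ratio K hK x0 hx0 hg
  rw [lam_eq x0 l hx0 hg hl hroot] at hr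
  have hM := log_div_of_ratio (fun n => bT n (K n)) l hl.1 1
    (fun n hn => bT_pos n _ (hK n hn).1) hr
  set S : ℝ := ∑' i : ℕ, 1 / ((i:ℝ)+1)^2 with hS
  have hSpos : 0 < S := by
    have hs2 : Summable (fun i : ℕ => 1 / ((i:ℝ)+1)^2) := by
      have := (summable_nat_add_iff 1).2 (Real.summable_one_div_nat_pow.2 (by norm_num : 1 < 2))
      simpa using this
    exact hs2.tsum_pos (fun i => by positivity) 0 (by norm_num)
  have u1 : Tendsto (fun n : ℕ => Real.log S / (n:ℝ)) atTop (nhds 0) :=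
    tendsto_const_div_atTop_nhds_zero_nat _
  have u2 : Tendsto (fun n : ℕ => Real.log (4 * (n:ℝ)^2) / (n:ℝ)) atTop (nhds 0) := by
    have := log_div_of_ratio (fun n => 4 * (n:ℝ)^2) 1 one_pos 1
      (fun n hn => by
        have : (0:ℝ) < n := by exact_mod_cast hn
        positivity) ?_
    · simpa using this
    · have hT : Tendsto (fun n : ℕ => 1 / (n:ℝ)) atTop (nhds 0) :=
        tendsto_one_div_atTop_nhds_zero_nat
      have h2 := (hT.const_add 1).pow 2
      rw [add_zero, one_pow] at h2
      refine h2.congr' ?_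
      filter_upwards [eventually_ge_atTop 1] with n hn
      have : (0:ℝ) < n := by exact_mod_cast hn
      push_cast
      field_simp
  have lo := hM.sub u2
  have hi := hM.add u1
  rw [sub_zero] at lo
  rw [add_zero] at hi
  refine tendsto_of_tendsto_of_tendsto_of_le_of_le' lo hi ?_ ?_
  · filter_upwards [eventually_ge_atTop 1] with n hn
    have h := hK n hn
    have hn0 : (0:ℝ) < n := by exact_mod_cast hn
    have hb := bT_pos n _ h.1
    have b := (rt_bounds n (K n) hn h.1 h.2.1 h.2.2).1
    rw [← sub_div, ← Real.log_div hb.ne' (by positivity)]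
    exact div_le_div_of_nonneg_right (Real.log_le_log (by positivity) b) hn0.le
  · filter_upwards [eventually_ge_atTop 1] with n hn
    have h := hK n hn
    have hn0 : (0:ℝ) < n := by exact_mod_cast hn
    have hb := bT_pos n _ h.1
    have b := rt_bounds n (K n) hn h.1 h.2.1 h.2.2
    have hp : 0 < |rt n| := lt_of_lt_of_le (by positivity) b.1
    rw [← add_div, ← Real.log_mul hb.ne' hSpos.ne']
    exact div_le_div_of_nonneg_right (Real.log_le_log hp b.2) hn0.le

/-- `lim (log |r̃_n|)/n = log λ₁` and
`lim (log |ũ_n|)/n = lim (log |w̃_n|)/n = lim (log |ṽ_n|)/n = log λ₃`, where `λ₁` is the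
unique root of `λ³ − 188λ² − 2368λ + 4` in `(0, 1)` and `λ₃` its unique root greater
than `1`. -/
theorem stmt15
    (ut wt vt : ℕ → ℚ)
    (hut : Rec3 ut) (hwt : Rec3 wt) (hvt : Rec3 vt)
    (hut0 : ut 0 = 0) (hut1 : ut 1 = 2) (hut2 : ut 2 = 552)
    (hwt0 : wt 0 = 1) (hwt1 : wt 1 = 12) (hwt2 : wt 2 = 1764)
    (hvt0 : vt 0 = 0) (hvt1 : vt 1 = 33/2) (hvt2 : vt 2 = 43085/16)
    (lam1 : ℝ) (hlam1root : lam1^3 - 188*lam1^2 - 2368*lam1 + 4 = 0)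
    (hlam1mem : lam1 ∈ Set.Ioo (0 : ℝ) 1)
    (lam3 : ℝ) (hlam3root : lam3^3 - 188*lam3^2 - 2368*lam3 + 4 = 0)
    (hlam3mem : 1 < lam3) :
    Tendsto (fun n : ℕ => Real.log |rt n| / (n : ℝ)) atTop (nhds (Real.log lam1)) ∧
    Tendsto (fun n : ℕ => Real.log |(ut n : ℝ)| / (n : ℝ)) atTop (nhds (Real.log lam3)) ∧
    Tendsto (fun n : ℕ => Real.log |(wt n : ℝ)| / (n : ℝ)) atTop (nhds (Real.log lam3)) ∧
    Tendsto (fun n : ℕ => Real.log |(vt n : ℝ)| / (n : ℝ)) atTop (nhds (Real.log lam3)) := by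
  exact ⟨rt_limit lam1 hlam1mem hlam1root,
    rec3_limit ut hut lam3 hlam3mem hlam3root (by rw [hut1]; norm_num)
      (by rw [hut0, hut1]; norm_num) (by rw [hut1, hut2]; norm_num),
    rec3_limit wt hwt lam3 hlam3mem hlam3root (by rw [hwt1]; norm_num)
      (by rw [hwt0, hwt1]; norm_num) (by rw [hwt1, hwt2]; norm_num),
    rec3_limit vt hvt lam3 hlam3mem hlam3root (by rw [hvt1]; norm_num)
      (by rw [hvt0, hvt1]; norm_num) (by rw [hvt1, hvt2]; norm_num)⟩
end
end
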